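/- Fix φ > 0, and let π_μ, π_α : (0,∞) → (0,∞) be continuous with π_μ(μ) ∝ μ^k on (0,∞), π_α(α) ∝ α^{q₀} as α → 0⁺, and π_α(α) ∝ α^{q_∞} as α → ∞, where k, q₀, q_∞ ∈ ℝ. Then ∫_0^∞ ∫_0^∞ π_α(α) π_μ(μ) α^n (∏_{i=1}^n x_i^{αφ−1}) μ^{nαφ} exp(−μ^α Σ_{i=1}^n x_i^α) dμ dα < ∞ if and only if k = −1 and n > −q₀. Moreover, in the proper case, for every natural number r the integral with the integrand multiplied by the extra factor α^r is finite (all posterior moments of α are finite), while the integral with the integrand multiplied by the extra factor μ is infinite (the posterior mean of μ is not finite). -/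

import Mathlib

/-!
Write `S(α) = ∑ x_i ^ α` and `P(α) = ∏ x_i ^ (αφ - 1)`.

**Convergence.** If `πμ(μ) ∝ μ⁻¹`, the inner integral is at most a constant times
`πα(α) α ^ n P(α)` times the gamma integral
`∫ μ ^ (nαφ - 1) exp (-S(α) μ ^ α) dμ = α⁻¹ S(α) ^ (-nφ) Γ(nφ)`. As the data are not all equal, `P(α) S(α) ^ (-nφ)` decays exponentially in `α` (`data_factor_decay`), so the outer
integrand, even with an extra factor `α ^ r`, is integrable at infinity. Near `0` it is of order
at most `α ^ (q₀ + n + r - 1)`, integrable when `q₀ + n > 0` (`joint_lintegral_lt_top`).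

**Divergence.** No asymptotics of the gamma function are needed. For `α` near `0` and
`μ ≤ e^{1/α}` one has `μ ^ α ≤ e`, so the integrand is at least a constant times
`α ^ (q₀ + n) μ ^ (k + nαφ)`. If `k < -1`, this is not integrable at `μ = 0` for small `α`.
If `k ≥ -1`, restricting to `e^{1/(2α)} < μ ≤ e^{1/α}` bounds the inner integral below by
a constant times `α ^ (q₀ + n) e^{(k+1)/(2α)} α⁻¹`, which is at least a constant times `α⁻¹`
when `k > -1` or `q₀ + n ≤ 0`; and `α⁻¹` is not integrable at `0` (`joint_lintegral_eq_top`).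

The posterior mean of `μ` is infinite by the same criterion applied with the weight
`μ πμ(μ) ∝ μ ^ 0`.
-/

open MeasureTheory Real Filter Topology

/-! ### Divergence -/

/-- The divergence at the origin responsible for every infinite integral below. -/
lemma lintegral_rpow_eq_top {s δ : ℝ} (hs : s ≤ -1) (hδ : 0 < δ) :
    ∫⁻ t in Set.Ioo 0 δ, ENNReal.ofReal (t ^ s) = ⊤ := by
  by_contra h
  have h1 : IntegrableOn (fun t : ℝ => t ^ s) (Set.Ioo 0 δ) := by
    refine ⟨(measurable_id.pow_const s).aestronglyMeasurable, ?_⟩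
    rw [hasFiniteIntegral_iff_ofReal]
    · exact lt_top_iff_ne_top.2 h
    · filter_upwards [ae_restrict_mem measurableSet_Ioo] with t ht
      exact rpow_nonneg ht.1.le _
  rw [intervalIntegral.integrableOn_Ioo_rpow_iff hδ] at h1
  linarith

lemma lintegral_eq_top_of_inv_le {f : ℝ → ENNReal} {c : ℝ} (hc : 0 < c)
    (h : ∀ᶠ t in 𝓝[>] (0:ℝ), ENNReal.ofReal (c * t⁻¹) ≤ f t) :
    ∫⁻ t in Set.Ioi 0, f t = ⊤ := by
  obtain ⟨δ, hδ, hsub⟩ := mem_nhdsGT_iff_exists_Ioo_subset.1 h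
  have hδ' : (0:ℝ) < δ := hδ
  rw [eq_top_iff]
  calc (⊤ : ENNReal) = ENNReal.ofReal c * ∫⁻ t in Set.Ioo 0 δ, ENNReal.ofReal (t ^ (-1:ℝ)) := by
        rw [lintegral_rpow_eq_top le_rfl hδ', ENNReal.mul_top]
        simpa using hc
    _ = ∫⁻ t in Set.Ioo 0 δ, ENNReal.ofReal (c * t⁻¹) := by
        rw [← lintegral_const_mul' _ _ ENNReal.ofReal_ne_top]
        refine setLIntegral_congr_fun measurableSet_Ioo fun t ht => ?_
        simp only [rpow_neg_one]
        rw [ENNReal.ofReal_mul hc.le]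
    _ ≤ ∫⁻ t in Set.Ioo 0 δ, f t := setLIntegral_mono' measurableSet_Ioo fun t ht => hsub ht
    _ ≤ _ := lintegral_mono_set Set.Ioo_subset_Ioi_self

/-- `∫ dμ / μ` over `(e^{1/(2α)}, e^{1/α}]` equals `1/(2α)`. -/
lemma lintegral_inv_exp_window {α : ℝ} (hα : 0 < α) :
    ∫⁻ t in Set.Ioc (exp (α⁻¹ / 2)) (exp α⁻¹), ENNReal.ofReal t⁻¹ =
      ENNReal.ofReal (α⁻¹ / 2) := by
  have hi : 0 < α⁻¹ := inv_pos.2 hα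
  have hle : exp (α⁻¹ / 2) ≤ exp α⁻¹ := exp_le_exp.2 (by linarith)
  have h0 : (0:ℝ) < exp (α⁻¹ / 2) := exp_pos _
  rw [← ofReal_integral_eq_lintegral_ofReal]
  · rw [← intervalIntegral.integral_of_le hle, integral_inv_of_pos h0 (exp_pos _),
      ← Real.exp_sub, Real.log_exp]
    congr 1; ring
  · have : IntervalIntegrable (fun t : ℝ => t⁻¹) volume (exp (α⁻¹ / 2)) (exp α⁻¹) := by
      apply intervalIntegral.intervalIntegrable_inv
      · intro t ht
        rw [Set.uIcc_of_le hle] at ht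
        exact (h0.trans_le ht.1).ne'
      · exact continuousOn_id
    exact (intervalIntegrable_iff_integrableOn_Ioc_of_le hle).1 this
  · filter_upwards [ae_restrict_mem measurableSet_Ioc] with t ht
    exact inv_nonneg.2 (h0.trans ht.1).le

/-- As `α → 0⁺` the power sum tends to `n` and the product to `∏ x_i⁻¹ > 0`, so the
likelihood is bounded below on `0 < μ ≤ e^{1/α}`, where `μ ^ α ≤ e`. -/
lemma likelihood_lower_bound {n : ℕ} {x : Fin n → ℝ} (hx : ∀ i, 0 < x i) (φ : ℝ) :
    ∃ K > 0, ∀ᶠ α in 𝓝[>] (0:ℝ), ∀ μ, 0 < μ → μ ≤ exp α⁻¹ →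
      K ≤ (∏ i, x i ^ (α * φ - 1)) * exp (-(μ ^ α * ∑ i, x i ^ α)) := by
  set P0 : ℝ := ∏ i, x i ^ ((0:ℝ) * φ - 1) with hP0
  have hP0pos : 0 < P0 := Finset.prod_pos fun i _ => rpow_pos_of_pos (hx i) _
  have hP : ContinuousAt (fun α : ℝ => ∏ i, x i ^ (α * φ - 1)) 0 := by
    refine tendsto_finsetProd _ fun i _ => ?_
    exact ContinuousAt.rpow continuousAt_const (by fun_prop) (Or.inl (hx i).ne')
  have hS : ContinuousAt (fun α : ℝ => ∑ i, x i ^ α) 0 := by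
    refine tendsto_finsetSum _ fun i _ => ?_
    exact ContinuousAt.rpow continuousAt_const (by fun_prop) (Or.inl (hx i).ne')
  have hS0 : ∑ i, x i ^ (0:ℝ) < n + 1 := by simp
  refine ⟨P0 / 2 * exp (-(exp 1 * (n + 1))), by positivity, ?_⟩
  filter_upwards [nhdsWithin_le_nhds (hP.eventually (lt_mem_nhds (half_lt_self hP0pos))),
    nhdsWithin_le_nhds (hS.eventually (gt_mem_nhds hS0)), self_mem_nhdsWithin]
    with α h1 h2 hα μ hμ hμle
  have hα : 0 < α := hα
  have hμα : μ ^ α ≤ exp 1 := by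
    calc μ ^ α ≤ (exp α⁻¹) ^ α := rpow_le_rpow hμ.le hμle hα.le
      _ = exp 1 := by rw [← Real.exp_mul, inv_mul_cancel₀ hα.ne']
  have hSnn : 0 ≤ ∑ i, x i ^ α := Finset.sum_nonneg fun i _ => (rpow_pos_of_pos (hx i) _).le
  have hPα : 0 ≤ ∏ i, x i ^ (α * φ - 1) :=
    Finset.prod_nonneg fun i _ => (rpow_pos_of_pos (hx i) _).le
  gcongr

/-- Divergence criterion with the asymptotic assumptions reduced to lower bounds. The argument
needs no continuity of the weights, so it also applies to `μ ↦ μ * πμ μ`. -/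
lemma joint_lintegral_eq_top {n : ℕ} (hn : 0 < n) {x : Fin n → ℝ} (hx : ∀ i, 0 < x i)
    {φ : ℝ} (hφ : 0 < φ) {p πα : ℝ → ℝ} {k q c cα : ℝ} (hc : 0 < c) (hcα : 0 < cα)
    (hp : ∀ t > 0, c * t ^ k ≤ p t) (hα : ∀ᶠ t in 𝓝[>] (0:ℝ), cα * t ^ q ≤ πα t)
    (h : ¬ (k = -1 ∧ -q < (n : ℝ))) :
    ∫⁻ α in Set.Ioi (0:ℝ), ∫⁻ μ in Set.Ioi (0:ℝ),
        ENNReal.ofReal (πα α * p μ * α ^ n *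
          (∏ i, x i ^ (α * φ - 1)) * μ ^ ((n : ℝ) * α * φ) *
          Real.exp (-(μ ^ α * ∑ i, x i ^ α))) = ⊤ := by
  obtain ⟨K, hK, hlik⟩ := likelihood_lower_bound hx φ
  have hn' : (0:ℝ) < n := by exact_mod_cast hn
  set C : ℝ := cα * c * K with hC
  have hCpos : 0 < C := by positivity
  have hlow : ∀ᶠ α in 𝓝[>] (0:ℝ), ∀ μ, 0 < μ → μ ≤ exp α⁻¹ →
      C * α ^ (q + n) * μ ^ (k + n * α * φ) ≤ πα α * p μ * α ^ n *
          (∏ i, x i ^ (α * φ - 1)) * μ ^ ((n : ℝ) * α * φ) *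
          Real.exp (-(μ ^ α * ∑ i, x i ^ α)) := by
    filter_upwards [hlik, hα, self_mem_nhdsWithin] with α h1 h2 h3 μ hμ hμle
    have h3 : 0 < α := h3
    have h4 := h1 μ hμ hμle
    calc C * α ^ (q + n) * μ ^ (k + n * α * φ)
        = (cα * α ^ q) * (c * μ ^ k) * α ^ n * μ ^ ((n : ℝ) * α * φ) * K := by
          rw [rpow_add h3, rpow_add hμ, rpow_natCast, hC]; ring
      _ ≤ πα α * p μ * α ^ n * μ ^ ((n : ℝ) * α * φ) *
          ((∏ i, x i ^ (α * φ - 1)) * Real.exp (-(μ ^ α * ∑ i, x i ^ α))) := by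
          have h5 := hp μ hμ
          have h6 : 0 < cα * α ^ q := by positivity
          have h7 : 0 < πα α := h6.trans_le h2
          have h8 : 0 < c * μ ^ k := by positivity
          have h9 : 0 < p μ := h8.trans_le h5
          gcongr
      _ = _ := by ring
  rcases lt_or_ge k (-1) with hk | hk
  · -- For small `α` the exponent of `μ` is at most `-1`, so the inner integral diverges at `0`.
    have hsmall : ∀ᶠ α in 𝓝[>] (0:ℝ), k + n * α * φ < -1 := by
      have : ContinuousAt (fun α : ℝ => k + n * α * φ) 0 := by fun_prop
      exact nhdsWithin_le_nhds (this.eventually (gt_mem_nhds (by simpa using hk)))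
    refine lintegral_eq_top_of_inv_le one_pos ?_
    filter_upwards [hlow, hsmall, self_mem_nhdsWithin] with α h1 h2 h3
    have h3 : 0 < α := h3
    have hD : 0 < C * α ^ (q + n) := by positivity
    refine le_top.trans ?_
    calc (⊤ : ENNReal) = ENNReal.ofReal (C * α ^ (q + n)) *
          ∫⁻ t in Set.Ioo 0 1, ENNReal.ofReal (t ^ (k + n * α * φ)) := by
          rw [lintegral_rpow_eq_top h2.le one_pos, ENNReal.mul_top]
          simpa using hD
      _ = ∫⁻ t in Set.Ioo 0 1, ENNReal.ofReal (C * α ^ (q + n) * t ^ (k + n * α * φ)) := by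
          rw [← lintegral_const_mul' _ _ ENNReal.ofReal_ne_top]
          refine lintegral_congr fun t => ?_
          rw [ENNReal.ofReal_mul hD.le]
      _ ≤ _ := (setLIntegral_mono' measurableSet_Ioo fun t ht =>
          ENNReal.ofReal_le_ofReal (h1 t ht.1 (ht.2.le.trans
            (one_le_exp (inv_nonneg.2 h3.le))))).trans
          (lintegral_mono_set Set.Ioo_subset_Ioi_self)
  · -- On the window `(e^{1/(2α)}, e^{1/α}]` one has `μ ^ k ≥ e^{(k+1)/(2α)} μ⁻¹`; the exponential
    -- beats every power of `α` when `k > -1`, and `α ^ (q+n) ≥ 1` when `k = -1`.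
    have hbig : ∀ᶠ α in 𝓝[>] (0:ℝ), 1 ≤ α ^ (q + n) * exp ((k + 1) / 2 * α⁻¹) := by
      rcases hk.eq_or_lt with hk | hk
      · have hq : q + n ≤ 0 := by
          by_contra hq
          exact h ⟨hk.symm, by linarith⟩
        filter_upwards [Ioo_mem_nhdsGT (zero_lt_one' ℝ)] with α hα
        rw [← hk]
        simpa using one_le_rpow_of_pos_of_le_one_of_nonpos hα.1 hα.2.le hq
      · have ht := (tendsto_exp_mul_div_rpow_atTop (q + n) ((k + 1) / 2) (by linarith)).comp
          (tendsto_inv_nhdsGT_zero (𝕜 := ℝ))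
        filter_upwards [ht.eventually_ge_atTop 1, self_mem_nhdsWithin] with α h1 h2
        have h2 : 0 < α := h2
        simp only [Function.comp] at h1
        rw [inv_rpow h2.le, div_inv_eq_mul, mul_comm] at h1
        exact h1
    refine lintegral_eq_top_of_inv_le (half_pos hCpos) ?_
    filter_upwards [hlow, hbig, self_mem_nhdsWithin] with α h1 h2 h3
    have h3 : 0 < α := h3
    have hwin : ∀ t ∈ Set.Ioc (exp (α⁻¹ / 2)) (exp α⁻¹),
        C * t⁻¹ ≤ C * α ^ (q + n) * t ^ (k + n * α * φ) := by
      intro t ht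
      have ht0 : 0 < t := (exp_pos _).trans ht.1
      have ht1 : 1 ≤ t := (one_le_exp (by positivity)).trans ht.1.le
      have e1 : exp ((k + 1) / 2 * α⁻¹) ≤ t ^ (k + 1) := by
        calc exp ((k + 1) / 2 * α⁻¹) = (exp (α⁻¹ / 2)) ^ (k + 1) := by
              rw [← Real.exp_mul]; congr 1; ring
          _ ≤ _ := rpow_le_rpow (exp_pos _).le ht.1.le (by linarith)
      have e2 : (1:ℝ) ≤ t ^ (n * α * φ) := one_le_rpow ht1 (by positivity)
      have e3 : t ^ (k + n * α * φ) = t ^ (k + 1) * t ^ (n * α * φ) * t⁻¹ := by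
        rw [← rpow_neg_one t, ← rpow_add ht0, ← rpow_add ht0]; congr 1; ring
      have e4 : 1 ≤ α ^ (q + n) * t ^ (k + 1) := h2.trans (by gcongr)
      have e5 := one_le_mul_of_one_le_of_one_le e4 e2
      calc C * t⁻¹ = C * (1 * t⁻¹) := by ring
        _ ≤ C * (α ^ (q + n) * t ^ (k + 1) * t ^ (n * α * φ) * t⁻¹) := by gcongr
        _ = _ := by rw [e3]; ring
    calc ENNReal.ofReal (C / 2 * α⁻¹)
        = ENNReal.ofReal C * ∫⁻ t in Set.Ioc (exp (α⁻¹ / 2)) (exp α⁻¹),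
            ENNReal.ofReal t⁻¹ := by
          rw [lintegral_inv_exp_window h3, ← ENNReal.ofReal_mul hCpos.le]
          congr 1; ring
      _ = ∫⁻ t in Set.Ioc (exp (α⁻¹ / 2)) (exp α⁻¹), ENNReal.ofReal (C * t⁻¹) := by
          rw [← lintegral_const_mul' _ _ ENNReal.ofReal_ne_top]
          refine lintegral_congr fun t => ?_
          rw [ENNReal.ofReal_mul hCpos.le]
      _ ≤ _ := (setLIntegral_mono' measurableSet_Ioc fun t ht =>
          ENNReal.ofReal_le_ofReal ((hwin t ht).trans
            (h1 t ((exp_pos _).trans ht.1) ht.2))).trans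
          (lintegral_mono_set fun t ht => (exp_pos _).trans ht.1)

/-! ### Convergence -/

/-- Because the data are not all equal, their geometric mean is strictly below their maximum;
since the power sum dominates the `α`-th power of the maximum, exponential decay in `α`
follows. -/
lemma data_factor_decay {n : ℕ} {x : Fin n → ℝ} (hx : ∀ i, 0 < x i)
    (hxne : ∃ i j, x i ≠ x j) {φ : ℝ} (hφ : 0 < φ) :
    ∃ d > 0, ∃ D > 0, ∀ α > 0,
      (∏ i, x i ^ (α * φ - 1)) * (∑ i, x i ^ α) ^ (-((n : ℝ) * φ)) ≤ D * exp (-d * α) := by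
  obtain ⟨i₀, j₀, hij⟩ := hxne
  obtain ⟨m, -, hm⟩ := Finset.exists_max_image Finset.univ x ⟨i₀, Finset.mem_univ _⟩
  have hX : 0 < ∏ i, x i := Finset.prod_pos fun i _ => hx i
  have hlt : ∏ i, x i < x m ^ n := by
    have : ∏ i, x i < ∏ _i : Fin n, x m := by
      refine Finset.prod_lt_prod (fun i _ => hx i) (fun i hi => hm i hi) ?_
      by_contra! hcon
      exact hij ((le_antisymm (hm _ (Finset.mem_univ _)) (hcon i₀ (Finset.mem_univ _))).trans
        (le_antisymm (hm _ (Finset.mem_univ _)) (hcon j₀ (Finset.mem_univ _))).symm)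
    simpa using this
  have hlog : log (∏ i, x i) < n * log (x m) := by
    rw [← Real.log_pow]; exact Real.log_lt_log hX hlt
  refine ⟨φ * (n * log (x m) - log (∏ i, x i)), mul_pos hφ (by linarith), (∏ i, x i)⁻¹,
    inv_pos.2 hX, fun α hα => ?_⟩
  have hS : x m ^ α ≤ ∑ i, x i ^ α :=
    Finset.single_le_sum (f := fun i => x i ^ α) (fun i _ => (rpow_pos_of_pos (hx i) _).le)
      (Finset.mem_univ m)
  have hSp : (∑ i, x i ^ α) ^ (-((n : ℝ) * φ)) ≤ (x m ^ α) ^ (-((n : ℝ) * φ)) :=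
    rpow_le_rpow_of_nonpos (rpow_pos_of_pos (hx m) _) hS
      (neg_nonpos.2 (by positivity))
  rw [Real.finsetProd_rpow _ _ fun i _ => (hx i).le]
  calc (∏ i, x i) ^ (α * φ - 1) * (∑ i, x i ^ α) ^ (-((n : ℝ) * φ))
      ≤ (∏ i, x i) ^ (α * φ - 1) * (x m ^ α) ^ (-((n : ℝ) * φ)) := by gcongr
    _ = _ := by
      rw [rpow_sub_one hX.ne', ← rpow_mul (hx m).le, rpow_def_of_pos hX,
        rpow_def_of_pos (hx m), div_eq_inv_mul, mul_assoc, ← Real.exp_add]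
      congr 2; ring

lemma outer_lintegrable {πα : ℝ → ℝ} (hc : ContinuousOn πα (Set.Ioi 0))
    (h0 : ∀ t > 0, 0 < πα t) {q qinf M Minf d s : ℝ} (hd : 0 < d) (hq : -1 < q + s)
    (hM : ∀ᶠ t in 𝓝[>] (0:ℝ), πα t ≤ M * t ^ q)
    (hMinf : ∀ᶠ t in atTop, πα t ≤ Minf * t ^ qinf) :
    ∫⁻ t in Set.Ioi (0:ℝ), ENNReal.ofReal (πα t * t ^ s * exp (-d * t)) < ⊤ := by
  set f : ℝ → ℝ := fun t => πα t * t ^ s * exp (-d * t) with hf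
  have hfc : ContinuousOn f (Set.Ioi 0) := by
    refine (hc.mul ?_).mul (by fun_prop)
    exact fun t ht => (continuousAt_rpow_const t s (Or.inl (ne_of_gt ht))).continuousWithinAt
  obtain ⟨δ, hδ, hsub⟩ := mem_nhdsGT_iff_exists_Ioo_subset.1 hM
  have hδ' : (0:ℝ) < δ := hδ
  have hη : 0 < δ / 2 := by linarith
  have hnear : IntegrableOn f (Set.Ioc 0 (δ / 2)) := by
    have hg : IntegrableOn (fun t : ℝ => M * t ^ (q + s)) (Set.Ioc 0 (δ / 2)) :=
      ((intervalIntegrable_iff_integrableOn_Ioc_of_le hη.le).1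
        (intervalIntegral.intervalIntegrable_rpow' hq)).const_mul M
    refine Integrable.mono' hg ?_ ?_
    · exact (hfc.mono Set.Ioc_subset_Ioi_self).aestronglyMeasurable measurableSet_Ioc
    · filter_upwards [ae_restrict_mem measurableSet_Ioc] with t ht
      have ht0 : 0 < t := ht.1
      have hb : πα t ≤ M * t ^ q := hsub ⟨ht.1, by linarith [ht.2]⟩
      have hp := h0 t ht0
      have he : exp (-d * t) ≤ 1 := exp_le_one_iff.2 (by nlinarith)
      rw [Real.norm_of_nonneg (by positivity), rpow_add ht0, ← mul_assoc]
      calc f t ≤ πα t * t ^ s * 1 := by simp only [hf]; gcongr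
        _ ≤ M * t ^ q * t ^ s := by rw [mul_one]; gcongr
  have hfar : IntegrableOn f (Set.Ioi (δ / 2)) := by
    refine integrable_of_isBigO_exp_neg (half_pos hd)
      (hfc.mono fun t ht => hη.trans_le ht) ?_
    -- A power is absorbed by half of the exponential decay.
    have h1 : f =O[atTop] fun t => t ^ (qinf + s) * exp (-d * t) := by
      refine Asymptotics.IsBigO.of_bound Minf ?_
      filter_upwards [hMinf, eventually_gt_atTop 0] with t h1 h2
      have hp := h0 t h2
      rw [Real.norm_of_nonneg (by positivity), Real.norm_of_nonneg (by positivity), rpow_add h2]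
      calc f t ≤ (Minf * t ^ qinf) * t ^ s * exp (-d * t) := by simp only [hf]; gcongr
        _ = _ := by ring
    have h2 : (fun t : ℝ => t ^ (qinf + s) * exp (-d * t)) =O[atTop]
        fun t => exp (-(d / 2) * t) := by
      have h3 := (isLittleO_rpow_exp_pos_mul_atTop (qinf + s) (half_pos hd)).isBigO.mul
        (Asymptotics.isBigO_refl (fun t : ℝ => exp (-d * t)) atTop)
      refine h3.congr_right fun t => ?_
      rw [← Real.exp_add]; congr 1; ring
    exact h1.trans h2
  have hall : IntegrableOn f (Set.Ioi 0) := by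
    rw [← Set.Ioc_union_Ioi_eq_Ioi hη.le]
    exact hnear.union hfar
  refine (hasFiniteIntegral_iff_ofReal ?_).1 hall.2
  filter_upwards [ae_restrict_mem measurableSet_Ioi] with t ht
  have ht : 0 < t := ht
  have hp := h0 t ht
  positivity

/-- For `k = -1`, up to factors not depending on `μ`, the inner integral is bounded by the gamma
integral `α⁻¹ (∑ x_i ^ α) ^ (-nφ) Γ(nφ)`; what remains is a one-dimensional integral in `α`. -/
lemma joint_lintegral_lt_top {n : ℕ} (hn : 0 < n) {x : Fin n → ℝ} (hx : ∀ i, 0 < x i)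
    (hxne : ∃ i j, x i ≠ x j) {φ : ℝ} (hφ : 0 < φ) {πμ πα : ℝ → ℝ}
    (hc : ContinuousOn πα (Set.Ioi 0)) (h0 : ∀ t > 0, 0 < πα t) {q qinf Mμ M Minf : ℝ}
    (hμ : ∀ t > 0, πμ t ≤ Mμ * t ^ (-1 : ℝ)) (hμ0 : ∀ t > 0, 0 < πμ t)
    (hM : ∀ᶠ t in 𝓝[>] (0:ℝ), πα t ≤ M * t ^ q)
    (hMinf : ∀ᶠ t in atTop, πα t ≤ Minf * t ^ qinf)
    (hq : -q < (n : ℝ)) (r : ℕ) :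
    ∫⁻ α in Set.Ioi (0:ℝ), ∫⁻ μ in Set.Ioi (0:ℝ),
      ENNReal.ofReal (α ^ r * (πα α * πμ μ * α ^ n *
        (∏ i, x i ^ (α * φ - 1)) * μ ^ ((n : ℝ) * α * φ) *
        Real.exp (-(μ ^ α * ∑ i, x i ^ α)))) < ⊤ := by
  obtain ⟨d, hd, D, hD, hdec⟩ := data_factor_decay hx hxne hφ
  have hn' : (0:ℝ) < n := by exact_mod_cast hn
  have hMμ : 0 < Mμ := by
    have := (hμ0 1 one_pos).trans_le (hμ 1 one_pos)
    simpa using this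
  have hG : 0 < Gamma (n * φ) := Gamma_pos_of_pos (by positivity)
  have hne : (Finset.univ : Finset (Fin n)).Nonempty := ⟨⟨0, hn⟩, Finset.mem_univ _⟩
  have hr : (0:ℝ) ≤ r := r.cast_nonneg
  set E : ℝ := Mμ * Gamma (n * φ) * D with hE
  have hEpos : 0 < E := by positivity
  have hinner : ∀ α ∈ Set.Ioi (0:ℝ), (∫⁻ μ in Set.Ioi (0:ℝ),
      ENNReal.ofReal (α ^ r * (πα α * πμ μ * α ^ n *
        (∏ i, x i ^ (α * φ - 1)) * μ ^ ((n : ℝ) * α * φ) *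
        Real.exp (-(μ ^ α * ∑ i, x i ^ α))))) ≤
      ENNReal.ofReal E * ENNReal.ofReal (πα α * α ^ ((r:ℝ) + n - 1) * exp (-d * α)) := by
    intro α hα
    have hα : 0 < α := hα
    set S : ℝ := ∑ i, x i ^ α with hS
    have hSpos : 0 < S := Finset.sum_pos (fun i _ => rpow_pos_of_pos (hx i) _) hne
    set P : ℝ := ∏ i, x i ^ (α * φ - 1) with hP
    have hPpos : 0 < P := Finset.prod_pos fun i _ => rpow_pos_of_pos (hx i) _
    have hπ := h0 α hα
    set A : ℝ := α ^ r * (πα α * Mμ * α ^ n * P) with hA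
    have hApos : 0 < A := by positivity
    have hexp : -1 < (n:ℝ) * α * φ - 1 := by
      have : 0 < (n:ℝ) * α * φ := by positivity
      linarith
    calc (∫⁻ μ in Set.Ioi (0:ℝ), ENNReal.ofReal (α ^ r * (πα α * πμ μ * α ^ n * P *
          μ ^ ((n : ℝ) * α * φ) * Real.exp (-(μ ^ α * S)))))
        ≤ ∫⁻ μ in Set.Ioi (0:ℝ), ENNReal.ofReal A *
            ENNReal.ofReal (μ ^ ((n:ℝ) * α * φ - 1) * exp (-S * μ ^ α)) := by
          refine setLIntegral_mono' measurableSet_Ioi fun μ hμ' => ?_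
          have hμ' : 0 < μ := hμ'
          rw [← ENNReal.ofReal_mul hApos.le]
          refine ENNReal.ofReal_le_ofReal ?_
          have hb := hμ μ hμ'
          calc α ^ r * (πα α * πμ μ * α ^ n * P *
                μ ^ ((n : ℝ) * α * φ) * Real.exp (-(μ ^ α * S)))
              ≤ α ^ r * (πα α * (Mμ * μ ^ (-1:ℝ)) * α ^ n * P *
                μ ^ ((n : ℝ) * α * φ) * Real.exp (-(μ ^ α * S))) := by gcongr
            _ = _ := by
              rw [rpow_sub_one hμ'.ne', rpow_neg_one, hA,
                show -(μ ^ α * S) = -S * μ ^ α by ring]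
              ring
      _ = ENNReal.ofReal A * ENNReal.ofReal (S ^ (-((n:ℝ) * φ)) * (1 / α) * Gamma (n * φ)) := by
          rw [lintegral_const_mul' _ _ ENNReal.ofReal_ne_top,
            ← ofReal_integral_eq_lintegral_ofReal
              (integrableOn_rpow_mul_exp_neg_mul_rpow hexp hα hSpos),
            integral_rpow_mul_exp_neg_mul_rpow hα hexp hSpos]
          · have e1 : ((n:ℝ) * α * φ - 1 + 1) / α = n * φ := by field_simp; ring
            rw [neg_div, e1]
          · filter_upwards [ae_restrict_mem measurableSet_Ioi] with μ hμ'
            have hμ' : 0 < μ := hμ'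
            positivity
      _ ≤ _ := by
          rw [← ENNReal.ofReal_mul hApos.le, ← ENNReal.ofReal_mul hEpos.le]
          refine ENNReal.ofReal_le_ofReal ?_
          have hb := hdec α hα
          have e2 : α ^ ((r:ℝ) + n - 1) = α ^ r * α ^ n * (1 / α) := by
            rw [rpow_sub_one hα.ne', rpow_add hα, rpow_natCast, rpow_natCast]; ring
          calc A * (S ^ (-((n:ℝ) * φ)) * (1 / α) * Gamma (n * φ))
              = Mμ * Gamma (n * φ) * πα α * (α ^ r * α ^ n * (1 / α)) *
                (P * S ^ (-((n:ℝ) * φ))) := by rw [hA]; ring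
            _ ≤ Mμ * Gamma (n * φ) * πα α * (α ^ r * α ^ n * (1 / α)) *
                (D * exp (-d * α)) := by gcongr
            _ = _ := by rw [e2, hE]; ring
  refine (setLIntegral_mono' measurableSet_Ioi hinner).trans_lt ?_
  rw [lintegral_const_mul' _ _ ENNReal.ofReal_ne_top]
  exact ENNReal.mul_lt_top ENNReal.ofReal_lt_top
    (outer_lintegrable hc h0 hd (by linarith) hM hMinf)

/-! ### Translation of the asymptotic hypotheses, and the theorem -/

lemma eventually_le_of_limsup_lt_top {f g : ℝ → ℝ} {l : Filter ℝ}
    (hg : ∀ᶠ t in l, 0 < g t)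
    (h : limsup (fun t => ENNReal.ofReal (f t / g t)) l < ⊤) :
    ∃ M > 0, ∀ᶠ t in l, f t ≤ M * g t := by
  obtain ⟨M, hM1, hM2⟩ := exists_between h
  refine ⟨M.toReal, ENNReal.toReal_pos (bot_le.trans_lt hM1).ne' hM2.ne, ?_⟩
  filter_upwards [eventually_lt_of_limsup_lt hM1, hg] with t h1 h2
  rw [← div_le_iff₀ h2]
  exact (ENNReal.ofReal_le_iff_le_toReal hM2.ne).1 h1.le

/-- (Theorem 2.6 of the paper.) In the Stacy model with `φ > 0` known,
if `π_μ(μ) ∝ μ^k` on `(0,∞)`, `π_α(α) ∝ α^{q₀}` as `α → 0⁺` and `π_α(α) ∝ α^{q_∞}` as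
`α → ∞`, then the posterior for `(μ,α)` is proper iff `k = -1` and `n > -q₀`; moreover
in the proper case all posterior moments of `α` are finite while the posterior mean of
`μ` is not. -/
theorem stacy_phi_known_posterior_proper_iff
    (n : ℕ) (hn : 2 ≤ n) (x : Fin n → ℝ) (hx : ∀ i, 0 < x i) (hxne : ∃ i j, x i ≠ x j)
    (φ : ℝ) (hφ : 0 < φ)
    (πμ πα : ℝ → ℝ)
    (hπμc : ContinuousOn πμ (Set.Ioi 0)) (hπαc : ContinuousOn πα (Set.Ioi 0))
    (hπμ0 : ∀ t > 0, 0 < πμ t) (hπα0 : ∀ t > 0, 0 < πα t)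
    (k q₀ qinf : ℝ)
    (hμ₁ : ∃ M > 0, ∀ t > 0, πμ t ≤ M * t ^ k)
    (hμ₂ : ∃ c > 0, ∀ t > 0, c * t ^ k ≤ πμ t)
    (hα0₁ : Filter.limsup (fun t => ENNReal.ofReal (πα t / t ^ q₀)) (𝓝[>] (0:ℝ)) < ⊤)
    (hα0₂ : Filter.limsup (fun t => ENNReal.ofReal (t ^ q₀ / πα t)) (𝓝[>] (0:ℝ)) < ⊤)
    (hαinf₁ : Filter.limsup (fun t => ENNReal.ofReal (πα t / t ^ qinf)) Filter.atTop < ⊤)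
    (hαinf₂ : Filter.limsup (fun t => ENNReal.ofReal (t ^ qinf / πα t)) Filter.atTop < ⊤) :
    ((∫⁻ α in Set.Ioi (0:ℝ), ∫⁻ μ in Set.Ioi (0:ℝ),
        ENNReal.ofReal (πα α * πμ μ * α ^ n *
          (∏ i, x i ^ (α * φ - 1)) * μ ^ ((n : ℝ) * α * φ) *
          Real.exp (-(μ ^ α * ∑ i, x i ^ α)))) < ⊤ ↔
      (k = -1 ∧ -q₀ < (n : ℝ))) ∧
    ((k = -1 ∧ -q₀ < (n : ℝ)) →
      (∀ r : ℕ,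
        (∫⁻ α in Set.Ioi (0:ℝ), ∫⁻ μ in Set.Ioi (0:ℝ),
          ENNReal.ofReal (α ^ r * (πα α * πμ μ * α ^ n *
            (∏ i, x i ^ (α * φ - 1)) * μ ^ ((n : ℝ) * α * φ) *
            Real.exp (-(μ ^ α * ∑ i, x i ^ α))))) < ⊤) ∧
      (∫⁻ α in Set.Ioi (0:ℝ), ∫⁻ μ in Set.Ioi (0:ℝ),
        ENNReal.ofReal (μ * (πα α * πμ μ * α ^ n *
          (∏ i, x i ^ (α * φ - 1)) * μ ^ ((n : ℝ) * α * φ) *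
          Real.exp (-(μ ^ α * ∑ i, x i ^ α))))) = ⊤) := by
  have hn0 : 0 < n := by omega
  obtain ⟨Mμ, -, hμ₁⟩ := hμ₁
  obtain ⟨c, hc, hμ₂⟩ := hμ₂
  have hpos0 : ∀ᶠ t in 𝓝[>] (0:ℝ), 0 < t := self_mem_nhdsWithin
  have hpow : ∀ s : ℝ, ∀ t : ℝ, 0 < t → 0 < t ^ s := fun s t ht => rpow_pos_of_pos ht s
  obtain ⟨M, -, hM⟩ := eventually_le_of_limsup_lt_top (hpos0.mono (hpow q₀)) hα0₁
  obtain ⟨M', hM'0, hM'⟩ := eventually_le_of_limsup_lt_top (hpos0.mono hπα0) hα0₂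
  obtain ⟨Minf, -, hMinf⟩ := eventually_le_of_limsup_lt_top
    ((eventually_gt_atTop 0).mono (hpow qinf)) hαinf₁
  have hlow : ∀ᶠ t in 𝓝[>] (0:ℝ), M'⁻¹ * t ^ q₀ ≤ πα t := by
    filter_upwards [hM'] with t ht
    rwa [inv_mul_le_iff₀ hM'0]
  have hfin : (k = -1 ∧ -q₀ < (n : ℝ)) → ∀ r : ℕ,
      (∫⁻ α in Set.Ioi (0:ℝ), ∫⁻ μ in Set.Ioi (0:ℝ),
          ENNReal.ofReal (α ^ r * (πα α * πμ μ * α ^ n *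
            (∏ i, x i ^ (α * φ - 1)) * μ ^ ((n : ℝ) * α * φ) *
            Real.exp (-(μ ^ α * ∑ i, x i ^ α))))) < ⊤ := by
    rintro ⟨rfl, hq⟩ r
    exact joint_lintegral_lt_top hn0 hx hxne hφ hπαc hπα0 hμ₁ hπμ0 hM hMinf hq r
  refine ⟨⟨fun h => ?_, fun h => by simpa using hfin h 0⟩, fun h => ⟨hfin h, ?_⟩⟩
  · by_contra hcon
    exact h.ne (joint_lintegral_eq_top hn0 hx hφ hc (inv_pos.2 hM'0) hμ₂ hlow hcon)
  · -- The extra factor `μ` turns the weight in `μ` into one of order `μ ^ 0`, and `0 ≠ -1`.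
    have hp : ∀ t > 0, c * t ^ (0:ℝ) ≤ t * πμ t := by
      intro t ht
      have h1 := mul_le_mul_of_nonneg_left (hμ₂ t ht) ht.le
      rw [h.1, rpow_neg_one] at h1
      calc c * t ^ (0:ℝ) = t * (c * t⁻¹) := by rw [rpow_zero]; field_simp
        _ ≤ _ := h1
    rw [← joint_lintegral_eq_top (q := q₀) hn0 hx hφ hc (inv_pos.2 hM'0) hp hlow
      (fun h' => by norm_num at h')]
    refine lintegral_congr fun α => lintegral_congr fun μ => ?_
    congr 1; ring
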